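/- For every commutative ring R, every R-algebra A, and every natural number n, there exists an n-jet algebra of A over R; that is, there exist an R-algebra J and bijections θ_C : Hom_{R-alg}(J, C) → Hom_{R-alg}(A, C[t]/(t^{n+1})), one for each commutative R-algebra C, which are natural in C. -/

import Mathlib

/-!
The jet algebra is built by generators and relations. Take the polynomial ring over `R` on symbols
`a⁽ⁱ⁾` for `a : A` and `i ≤ n`, put `U a = ∑ a⁽ⁱ⁾ tⁱ`, and divide by the ideal `JetAux.ideal`
generated by the coefficients, in degrees at most `n`, of the polynomials expressing that `U` is
additive, multiplicative and compatible with scalars. Over the quotient `J`, `U` becomes an algebra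
homomorphism `JetAux.univ : A → J[t]/(t^{n+1})`, and `θ_C ψ` is the composite of `univ` with the map
induced by `ψ`, which makes naturality automatic. It is injective because `θ_C ψ` determines the
values of `ψ` on the generators, and surjective because a homomorphism `φ : A → C[t]/(t^{n+1})`
defines values for the generators, namely the coefficients of the `φ a`, that satisfy the relations.
-/

open Polynomial

universe u

/-- The truncated polynomial ring `C[t]/(t^{n+1})`. -/
abbrev TruncPoly (C : Type u) [CommRing C] (n : ℕ) : Type u :=
  Polynomial C ⧸ Ideal.span {(X : Polynomial C) ^ (n + 1)}

/-- The `R`-algebra homomorphism `C[t]/(t^{n+1}) → C'[t]/(t^{n+1})` applying an `R`-algebra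
homomorphism `g : C → C'` to coefficients. -/
noncomputable def truncMap {R C C' : Type u} [CommRing R] [CommRing C] [CommRing C']
    [Algebra R C] [Algebra R C'] (g : C →ₐ[R] C') (n : ℕ) :
    TruncPoly C n →ₐ[R] TruncPoly C' n :=
  Ideal.Quotient.liftₐ _
    ((Ideal.Quotient.mkₐ R (Ideal.span {(X : Polynomial C') ^ (n + 1)})).comp
      (Polynomial.mapAlgHom g)) (by
    intro a ha
    rw [Ideal.mem_span_singleton'] at ha
    obtain ⟨b, rfl⟩ := ha
    simp only [AlgHom.comp_apply, map_mul, map_pow]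
    have h1 : (Polynomial.mapAlgHom g) (X : Polynomial C) = (X : Polynomial C') := by
      simp [Polynomial.mapAlgHom]
    rw [h1, ← map_pow, Ideal.Quotient.mkₐ_eq_mk]
    have h2 : (Ideal.Quotient.mk (Ideal.span {(X : Polynomial C') ^ (n + 1)}))
        ((X : Polynomial C') ^ (n + 1)) = 0 :=
      Ideal.Quotient.eq_zero_iff_mem.mpr (Ideal.subset_span rfl)
    rw [h2, mul_zero])

/-- An `n`-jet algebra of `A` over `R`: an `R`-algebra `J` together with bijections
`θ_C : Hom_{R-alg}(J, C) ≃ Hom_{R-alg}(A, C[t]/(t^{n+1}))`, natural in `C`. -/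
structure JetAlgebra (R A : Type u) [CommRing R] [CommRing A] [Algebra R A] (n : ℕ) where
  carrier : Type u
  [commRing : CommRing carrier]
  [alg : Algebra R carrier]
  θ : ∀ (C : Type u) [CommRing C] [Algebra R C],
      (carrier →ₐ[R] C) ≃ (A →ₐ[R] TruncPoly C n)
  naturality : ∀ (C C' : Type u) [CommRing C] [Algebra R C] [CommRing C'] [Algebra R C']
      (g : C →ₐ[R] C') (ψ : carrier →ₐ[R] C),
      θ C' (g.comp ψ) = (truncMap g n).comp (θ C ψ)

namespace JetAux

section Trunc

variable {C : Type u} [CommRing C] {n : ℕ}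

lemma mk_eq_zero_iff (p : C[X]) :
    (Ideal.Quotient.mk (Ideal.span {(X : C[X]) ^ (n + 1)}) p = 0) ↔
      ∀ i < n + 1, p.coeff i = 0 := by
  rw [Ideal.Quotient.eq_zero_iff_mem, Ideal.mem_span_singleton, X_pow_dvd_iff]

lemma mk_eq_mk_iff (p q : C[X]) :
    (Ideal.Quotient.mk (Ideal.span {(X : C[X]) ^ (n + 1)}) p = Ideal.Quotient.mk _ q) ↔
      ∀ i < n + 1, p.coeff i = q.coeff i := by
  rw [← sub_eq_zero, ← map_sub, mk_eq_zero_iff]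
  simp only [coeff_sub, sub_eq_zero]

end Trunc

lemma truncMap_mk {R C C' : Type u} [CommRing R] [CommRing C] [CommRing C']
    [Algebra R C] [Algebra R C'] (g : C →ₐ[R] C') (n : ℕ) (p : C[X]) :
    truncMap g n (Ideal.Quotient.mk _ p) = Ideal.Quotient.mk _ (p.map (g : C →+* C')) :=
  rfl

variable (R A : Type u) [CommRing R] (n : ℕ)

/-- The polynomial ring over `R` on the symbols `a⁽ⁱ⁾`, for `a : A` and `0 ≤ i ≤ n`. -/
abbrev Gen : Type u := MvPolynomial (A × Fin (n + 1)) R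

variable {A}

/-- The generic truncated arc `U a = ∑ a⁽ⁱ⁾ tⁱ` at `a`. -/
noncomputable def arc (a : A) : (Gen R A n)[X] :=
  ∑ i : Fin (n + 1), monomial (i : ℕ) (MvPolynomial.X (a, i))

lemma coeff_arc (a : A) (i : Fin (n + 1)) :
    (arc R n a).coeff i = MvPolynomial.X (a, i) := by
  simp [arc, coeff_monomial, Fin.val_inj]

variable (A) [CommRing A] [Algebra R A]

/-- The polynomials which must vanish modulo `t^{n+1}` for `a ↦ U a` to be an `R`-algebra
homomorphism. -/
inductive Rel : (Gen R A n)[X] → Prop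
  | add (a b : A) : Rel (arc R n (a + b) - (arc R n a + arc R n b))
  | mul (a b : A) : Rel (arc R n (a * b) - arc R n a * arc R n b)
  | scalar (r : R) : Rel (arc R n (algebraMap R A r) - C (MvPolynomial.C r))

/-- The ideal of relations of the jet algebra: the coefficients in degrees at most `n` of the
polynomials in `Rel`. -/
noncomputable def ideal : Ideal (Gen R A n) :=
  Ideal.span {c | ∃ d, Rel R A n d ∧ ∃ i < n + 1, c = d.coeff i}

/-- The underlying ring of the jet algebra. -/
abbrev Jet : Type u := Gen R A n ⧸ ideal R A n

lemma mk_map_rel {d : (Gen R A n)[X]} (hd : Rel R A n d) :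
    (Ideal.Quotient.mk _ (d.map (Ideal.Quotient.mk (ideal R A n))) :
      TruncPoly (Jet R A n) n) = 0 := by
  rw [mk_eq_zero_iff]
  intro i hi
  rw [coeff_map, Ideal.Quotient.eq_zero_iff_mem]
  exact Ideal.subset_span ⟨d, hd, i, hi, rfl⟩

/-- The universal truncated arc, as a function. -/
noncomputable def univFun (a : A) : TruncPoly (Jet R A n) n :=
  Ideal.Quotient.mk _ ((arc R n a).map (Ideal.Quotient.mk (ideal R A n)))

lemma univFun_add (a b : A) : univFun R A n (a + b) = univFun R A n a + univFun R A n b := by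
  have h := mk_map_rel R A n (Rel.add a b)
  rw [Polynomial.map_sub, Polynomial.map_add, map_sub, map_add, sub_eq_zero] at h
  exact h

lemma univFun_mul (a b : A) : univFun R A n (a * b) = univFun R A n a * univFun R A n b := by
  have h := mk_map_rel R A n (Rel.mul a b)
  rw [Polynomial.map_sub, Polynomial.map_mul, map_sub, map_mul, sub_eq_zero] at h
  exact h

lemma univFun_algebraMap (r : R) :
    univFun R A n (algebraMap R A r) = algebraMap R (TruncPoly (Jet R A n) n) r := by
  have h := mk_map_rel R A n (Rel.scalar r)
  rw [Polynomial.map_sub, Polynomial.map_C, map_sub, sub_eq_zero] at h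
  exact h

/-- The universal truncated arc `A → J[t]/(t^{n+1})`. -/
noncomputable def univ : A →ₐ[R] TruncPoly (Jet R A n) n where
  toFun := univFun R A n
  map_one' := by simpa using univFun_algebraMap R A n 1
  map_mul' := univFun_mul R A n
  map_zero' := by simpa using univFun_algebraMap R A n 0
  map_add' := univFun_add R A n
  commutes' := univFun_algebraMap R A n

variable {R A n} {C : Type u} [CommRing C] [Algebra R C]

lemma truncMap_univ (ψ : Jet R A n →ₐ[R] C) (a : A) :
    truncMap ψ n (univ R A n a) = Ideal.Quotient.mk _ ((arc R n a).map
      (ψ.comp (Ideal.Quotient.mkₐ R (ideal R A n)) : Gen R A n →+* C)) := by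
  change truncMap ψ n (Ideal.Quotient.mk _ _) = _
  rw [truncMap_mk, Polynomial.map_map]
  rfl

lemma theta_injective :
    Function.Injective fun ψ : Jet R A n →ₐ[R] C => (truncMap ψ n).comp (univ R A n) := by
  intro ψ ψ' h
  apply Ideal.Quotient.algHom_ext
  apply MvPolynomial.algHom_ext
  rintro ⟨a, i⟩
  have ha := DFunLike.congr_fun h a
  simp only [AlgHom.comp_apply] at ha
  rw [truncMap_univ, truncMap_univ, mk_eq_mk_iff] at ha
  simpa [coeff_map, coeff_arc] using ha i i.2

/-- The map from the polynomial ring sending `a⁽ⁱ⁾` to the `i`-th coefficient of `φ a`. The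
coefficients are read off an arbitrary representative: in degrees at most `n` they do not depend on
its choice. -/
noncomputable def genMap (φ : A →ₐ[R] TruncPoly C n) : Gen R A n →ₐ[R] C :=
  MvPolynomial.aeval fun p => (Quotient.out (φ p.1) : C[X]).coeff p.2

lemma mk_map_arc_genMap (φ : A →ₐ[R] TruncPoly C n) (a : A) :
    Ideal.Quotient.mk (Ideal.span {(X : C[X]) ^ (n + 1)})
      ((arc R n a).map (genMap φ : Gen R A n →+* C)) = φ a := by
  conv_rhs => rw [← Ideal.Quotient.mk_out (φ a)]
  rw [mk_eq_mk_iff]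
  intro i hi
  have h := coeff_arc R n a ⟨i, hi⟩
  simp only at h
  rw [coeff_map, h]
  simp [genMap]

lemma genMap_rel (φ : A →ₐ[R] TruncPoly C n) {d : (Gen R A n)[X]} (hd : Rel R A n d) :
    Ideal.Quotient.mk (Ideal.span {(X : C[X]) ^ (n + 1)})
      (d.map (genMap φ : Gen R A n →+* C)) = 0 := by
  cases hd with
  | add a b =>
    rw [Polynomial.map_sub, Polynomial.map_add, map_sub, map_add]
    simp only [mk_map_arc_genMap, map_add, sub_self]
  | mul a b =>
    rw [Polynomial.map_sub, Polynomial.map_mul, map_sub, map_mul]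
    simp only [mk_map_arc_genMap, map_mul, sub_self]
  | scalar r =>
    rw [Polynomial.map_sub, Polynomial.map_C, map_sub, mk_map_arc_genMap, φ.commutes, sub_eq_zero]
    have h : (genMap φ : Gen R A n →+* C) (MvPolynomial.C r) = algebraMap R C r :=
      (genMap φ).commutes r
    rw [h]
    rfl

lemma genMap_eq_zero (φ : A →ₐ[R] TruncPoly C n) :
    ∀ p ∈ ideal R A n, genMap φ p = 0 := by
  intro p hp
  have hle : ideal R A n ≤ RingHom.ker (genMap φ) := by
    refine Ideal.span_le.2 ?_
    rintro _ ⟨d, hd, i, hi, rfl⟩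
    have h := (mk_eq_zero_iff _).1 (genMap_rel φ hd) i hi
    rwa [coeff_map] at h
  exact hle hp

lemma theta_surjective :
    Function.Surjective fun ψ : Jet R A n →ₐ[R] C => (truncMap ψ n).comp (univ R A n) := by
  intro φ
  refine ⟨Ideal.Quotient.liftₐ _ (genMap φ) (genMap_eq_zero φ), ?_⟩
  ext a
  simp only [AlgHom.comp_apply]
  rw [truncMap_univ, Ideal.Quotient.liftₐ_comp, mk_map_arc_genMap]

end JetAux

/-- for every commutative ring `R`, every `R`-algebra `A` and every `n`, an
`n`-jet algebra of `A` over `R` exists. -/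
theorem stmt5 (R A : Type u) [CommRing R] [CommRing A] [Algebra R A] (n : ℕ) :
    Nonempty (JetAlgebra R A n) := by
  refine ⟨{
    carrier := JetAux.Jet R A n
    θ := fun C _ _ => Equiv.ofBijective
      (fun ψ : JetAux.Jet R A n →ₐ[R] C => (truncMap ψ n).comp (JetAux.univ R A n))
      ⟨JetAux.theta_injective, JetAux.theta_surjective⟩
    naturality := ?_ }⟩
  intro C C' _ _ _ _ g ψ
  ext a
  change truncMap (g.comp ψ) n (JetAux.univ R A n a) =
    truncMap g n (truncMap ψ n (JetAux.univ R A n a))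
  rw [JetAux.truncMap_univ, JetAux.truncMap_univ, JetAux.truncMap_mk, Polynomial.map_map]
  rfl
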